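/- Let 𝒞 = {𝓛₁, 𝓛₂} be a pseudo-fibered pair and g ∈ Aut(𝒞). If g is parabolic, then for each i ∈ {1,2} there is a crown of 𝓛_i preserved by g whose pivot is the unique fixed point of g. -/

import Mathlib

/-!
Why the theorem is true. Cut the circle open at the fixed point `p` of `g`, with a coordinate
`e : S¹ → [0, 1)` compatible with the circular order (`exists_coord`). In this coordinate `g` is
increasing, and since `p` is its only fixed point it moves all other points in the same direction
(`Coord.dichotomy`), so that all orbits tend to the end of `[0, 1)`, or all tend to `0`.

*The point `p` is not an endpoint of either system* (`Coord.base_not_E`). Suppose that leaves of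
`L` join `p` to some points. The set `X` of these points is invariant under forward iteration of
`g`. An endpoint `w ≠ p` of the other system has, by strong transversality, an orbit disjoint from
`X`. Both orbits are monotone and tend to the same end, so they alternate; this produces two
bounded complementary components of `X`. The set `X` is closed away from `p`, so each component
`(x, z)` has `x, z ∈ X`, and the leaves joining `p` to `x` and to `z`, together with the maximal
leaves lying on `(x, z)`, form a non-leaf gap with vertex `p` (`Coord.fan_gap`). Two such gaps
contradict looseness.

*The outermost leaves form a crown* (`Coord.out_gap`, `Coord.out_infinite`). When `p` is not an
endpoint, a leaf whose right endpoint is very close to `p` and which lies above a given leaf would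
be linked with its image under `g`. Hence every leaf lies on a maximal leaf interval avoiding `p`.
These outermost intervals form a gap having `p` as a vertex. The gap has infinitely many vertices,
because the image of an extreme vertex would be more extreme, so by quite fullness it is a crown.
Its tips are endpoints of leaves, so `p` must be the pivot.

*The crown is invariant* (`Coord.no_subdivision`, `Coord.out_crown`). Automorphisms are only
assumed to map the system into itself, so invariance again uses looseness. The image of an
outermost interval lies in an outermost interval `J`. If the image of a tip were inside `J`, then
`J` would contain images of two tips adjacent to its endpoints, giving leaves `(J.a, x)` and
`(y, J.b)` strictly inside `J`. These prevent leaves inside `J` from accumulating on `J`, so `J`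
borders a non-leaf gap on its inner side, sharing a vertex with the crown: a contradiction. So
images of outermost intervals are outermost, and all outermost intervals arise in this way.
-/

open Set Filter Topology

namespace Veering

/-- The circle `S¹`: the unit additive circle `ℝ / ℤ`, with its standard
circular order (`sbtw x y z` means the triple `(x,y,z)` is counterclockwise)
and its standard topology. -/
abbrev S1 : Type := UnitAddCircle

/-- A good open interval in `S¹`, recorded by its ordered pair of distinct
endpoints; its carrier is the set of points strictly counterclockwise
between them. -/
structure GoodInt : Type where
  a : S1
  b : S1
  ne : a ≠ b

namespace GoodInt

/-- The set of points of the good open interval `(a, b)`. -/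
def carrier (I : GoodInt) : Set S1 := {z : S1 | sbtw I.a z I.b}

/-- The dual good interval `(u,v)* = (v,u)`. -/
def dual (I : GoodInt) : GoodInt := ⟨I.b, I.a, I.ne.symm⟩

/-- The vertex set `v(ℓ(I)) = {a, b}` of the leaf determined by `I`. -/
def verts (I : GoodInt) : Set S1 := {I.a, I.b}

end GoodInt

/-- `I` and `J` represent the same leaf `ℓ(I) = {I, I*}`. -/
def SameLeaf (I J : GoodInt) : Prop := J = I ∨ J = I.dual

/-- A lamination system: a nonempty collection of good open intervals, closed
under duals, pairwise unlinked, and closed under unions of ascending chains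
(when these unions are good intervals). -/
structure LamSys : Type where
  mem : Set GoodInt
  nonempty : mem.Nonempty
  dual_mem : ∀ I ∈ mem, GoodInt.dual I ∈ mem
  unlinked : ∀ I ∈ mem, ∀ J ∈ mem,
      I.carrier ⊆ J.carrier ∨ I.dual.carrier ⊆ J.carrier ∨
      I.carrier ⊆ J.dual.carrier ∨ I.dual.carrier ⊆ J.dual.carrier
  chain_closed : ∀ c : ℕ → GoodInt, (∀ n, c n ∈ mem) →
      (∀ n, (c n).carrier ⊆ (c (n + 1)).carrier) →
      ∀ J : GoodInt, J.carrier = ⋃ n, (c n).carrier → J ∈ mem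

namespace LamSys

/-- The endpoint set `E(𝓛)`: the union of the vertex sets of all leaves. -/
def E (L : LamSys) : Set S1 := ⋃ I ∈ L.mem, I.verts

/-- A gap of `L`: a set of pairwise disjoint elements of `L` such that every
leaf of `L` lies on one of them. -/
def IsGap (L : LamSys) (G : Set GoodInt) : Prop :=
  G ⊆ L.mem ∧
  (∀ I ∈ G, ∀ J ∈ G, I ≠ J → Disjoint I.carrier J.carrier) ∧
  (∀ I ∈ L.mem, ∃ J ∈ G, I.carrier ⊆ J.carrier ∨ I.dual.carrier ⊆ J.carrier)

end LamSys

/-- The vertex set `v(𝒢) = S¹ \ ⋃ 𝒢` of a gap. -/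
def gapVerts (G : Set GoodInt) : Set S1 := (⋃ I ∈ G, I.carrier)ᶜ

/-- `t` is a tip of `G`: an isolated point of the vertex set of `G`. -/
def IsTipOf (t : S1) (G : Set GoodInt) : Prop :=
  t ∈ gapVerts G ∧ t ∉ closure (gapVerts G \ {t})

/-- A gap that is itself a leaf `{I, I*}`. -/
def IsLeafGap (G : Set GoodInt) : Prop := ∃ I : GoodInt, G = {I, I.dual}

/-- `G` is a crown with tip sequence `t : ℤ → S¹` and pivot `p`. -/
def IsCrownWith (G : Set GoodInt) (t : ℤ → S1) (p : S1) : Prop :=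
  (∀ k, p ≠ t k) ∧ (∀ k, t k ≠ t (k + 1)) ∧
  G = {I : GoodInt | ∃ k : ℤ, I.a = t k ∧ I.b = t (k + 1)} ∧
  gapVerts G = Set.range t ∪ {p}

/-- `G` is a crown. -/
def IsCrown (G : Set GoodInt) : Prop := ∃ t p, IsCrownWith G t p

/-- `p` is the pivot of the crown `G`. -/
def IsPivotOf (p : S1) (G : Set GoodInt) : Prop := ∃ t, IsCrownWith G t p

/-- A lamination system is quite full if every gap is an ideal polygon
(finitely many vertices) or a crown. -/
def LamSys.QuiteFull (L : LamSys) : Prop :=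
  ∀ G : Set GoodInt, L.IsGap G → (gapVerts G).Finite ∨ IsCrown G

/-- `p` is a rainbow point of `L`: there is a strictly descending sequence of
elements of `L` whose intersection is `{p}`. -/
def LamSys.IsRainbowPt (L : LamSys) (p : S1) : Prop :=
  ∃ I : ℕ → GoodInt, (∀ n, I n ∈ L.mem) ∧
    (∀ n, (I (n + 1)).carrier ⊂ (I n).carrier) ∧ (⋂ n, (I n).carrier) = {p}

/-- `L` is loose: distinct non-leaf gaps have disjoint vertex sets. -/
def LamSys.Loose (L : LamSys) : Prop :=
  ∀ G H : Set GoodInt, L.IsGap G → L.IsGap H → ¬ IsLeafGap G → ¬ IsLeafGap H →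
    G ≠ H → Disjoint (gapVerts G) (gapVerts H)

/-- The sequence of leaves represented by `c` converges to the good
interval `J`. -/
def SeqConv (c : ℕ → GoodInt) (J : GoodInt) : Prop :=
  ∃ d : ℕ → GoodInt, (∀ n, SameLeaf (c n) (d n)) ∧
    J.carrier ⊆ Filter.liminf (fun n => (d n).carrier) Filter.atTop ∧
    Filter.limsup (fun n => (d n).carrier) Filter.atTop ⊆ closure J.carrier

/-- `I ∈ L` admits an `I`-side sequence: a sequence of leaves of `L`, each
distinct from `ℓ(I)` and lying on `I`, converging to `I`.  (`I` is isolated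
precisely when this fails.) -/
def LamSys.HasSideSeq (L : LamSys) (I : GoodInt) : Prop :=
  ∃ c : ℕ → GoodInt, (∀ n, c n ∈ L.mem) ∧ (∀ n, ¬ SameLeaf I (c n)) ∧
    (∀ n, (c n).carrier ⊆ I.carrier ∨ (c n).dual.carrier ⊆ I.carrier) ∧
    SeqConv c I

/-- `L` is totally disconnected: every distinct pair is separated by a
non-leaf gap. -/
def LamSys.TotDisc (L : LamSys) : Prop :=
  ∀ I ∈ L.mem, ∀ J ∈ L.mem, I.carrier ⊂ J.dual.carrier →
    ∃ G : Set GoodInt, L.IsGap G ∧ ¬ IsLeafGap G ∧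
      ∃ M ∈ G, ∃ N ∈ G, I.carrier ⊆ M.carrier ∧ J.carrier ⊆ N.carrier

/-- Gaps `G1` and `G2` interleave: every element of each contains exactly one
vertex of the other. -/
def Interleave (G1 G2 : Set GoodInt) : Prop :=
  (∀ I ∈ G1, ∃! x : S1, x ∈ I.carrier ∩ gapVerts G2) ∧
  (∀ I ∈ G2, ∃! x : S1, x ∈ I.carrier ∩ gapVerts G1)

/-- A pseudo-fibered pair: two quite full, loose, strongly transverse
lamination systems. -/
structure PseudoFibered (L1 L2 : LamSys) : Prop where
  qf1 : L1.QuiteFull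
  qf2 : L2.QuiteFull
  loose1 : L1.Loose
  loose2 : L2.Loose
  transverse : L1.E ∩ L2.E = ∅

/-- A veering pair: a pseudo-fibered pair in which every non-leaf gap of one
system admits an interleaving gap in the other. -/
structure VeeringPair (L1 L2 : LamSys) extends PseudoFibered L1 L2 : Prop where
  inter1 : ∀ G : Set GoodInt, L1.IsGap G → ¬ IsLeafGap G →
    ∃ H : Set GoodInt, L2.IsGap H ∧ Interleave G H
  inter2 : ∀ G : Set GoodInt, L2.IsGap G → ¬ IsLeafGap G →
    ∃ H : Set GoodInt, L1.IsGap H ∧ Interleave G H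

/-- An orientation-preserving homeomorphism of the circle: a bijection of
`S¹` which together with its inverse is continuous, and which preserves the
counterclockwise circular order. -/
def PosHomeo (g : Equiv.Perm S1) : Prop :=
  Continuous ⇑g ∧ Continuous ⇑g.symm ∧
  ∀ x y z : S1, sbtw x y z → sbtw (g x) (g y) (g z)

/-- `g ∈ Aut(𝓛)`: an orientation-preserving homeomorphism of `S¹` mapping each
element of `𝓛` to an element of `𝓛`. -/
def LamSys.InAut (L : LamSys) (g : Equiv.Perm S1) : Prop :=
  PosHomeo g ∧ ∀ I ∈ L.mem, ∃ J ∈ L.mem, J.carrier = ⇑g '' I.carrier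

/-- `g` maps the gap `G` onto itself. -/
def MapsGapOnto (g : Equiv.Perm S1) (G : Set GoodInt) : Prop :=
  (∀ I ∈ G, ∃ J ∈ G, J.carrier = ⇑g '' I.carrier) ∧
  (∀ J ∈ G, ∃ I ∈ G, J.carrier = ⇑g '' I.carrier)

/-- The fixed point set of `g` on `S¹`. -/
def FixSet (g : Equiv.Perm S1) : Set S1 := {x : S1 | g x = x}

/-- The set of periodic points of `g` on `S¹`. -/
def PerSet (g : Equiv.Perm S1) : Set S1 := {x : S1 | ∃ n : ℕ, 0 < n ∧ (g ^ n) x = x}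

/-- `p` is an attracting fixed point of `g`. -/
def IsAttractingFix (g : Equiv.Perm S1) (p : S1) : Prop :=
  g p = p ∧ ∃ I : GoodInt, I.carrier ∩ FixSet g = {p} ∧
    ⇑g '' closure I.carrier ⊆ I.carrier

/-- `p` is a repelling fixed point of `g`. -/
def IsRepellingFix (g : Equiv.Perm S1) (p : S1) : Prop :=
  g p = p ∧ ∃ I : GoodInt, I.carrier ∩ FixSet g = {p} ∧
    I.carrier ⊆ ⇑g '' closure I.carrier

/-- `g` is elliptic: nontrivial of finite order. -/
def Elliptic (g : Equiv.Perm S1) : Prop := g ≠ 1 ∧ IsOfFinOrder g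

/-- `g` is parabolic: it has exactly one fixed point. -/
def Parabolic (g : Equiv.Perm S1) : Prop := ∃! x : S1, g x = x

/-- `g` is hyperbolic: exactly two fixed points, one attracting and one
repelling. -/
def Hyperbolic (g : Equiv.Perm S1) : Prop :=
  ∃ a b : S1, a ≠ b ∧ FixSet g = {a, b} ∧ IsAttractingFix g a ∧ IsRepellingFix g b

/-- `g` is pseudo-Anosov-like for the pair `(L1, L2)`: nontrivial, neither
elliptic nor parabolic, and preserving both gaps of some interleaving pair. -/
def PAlike (L1 L2 : LamSys) (g : Equiv.Perm S1) : Prop :=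
  g ≠ 1 ∧ ¬ Elliptic g ∧ ¬ Parabolic g ∧
  ∃ G1 G2 : Set GoodInt, L1.IsGap G1 ∧ L2.IsGap G2 ∧ Interleave G1 G2 ∧
    MapsGapOnto g G1 ∧ MapsGapOnto g G2

/-- `g` is properly pseudo-Anosov: pA-like with nonempty fixed point set. -/
def ProperlyPA (L1 L2 : LamSys) (g : Equiv.Perm S1) : Prop :=
  PAlike L1 L2 g ∧ (FixSet g).Nonempty

/-- Two leaves are linked: each of the two complementary components of the
vertex set of one contains a vertex of the other. -/
def LeavesLinked (I J : GoodInt) : Prop :=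
  (I.carrier ∩ J.verts).Nonempty ∧ (I.dual.carrier ∩ J.verts).Nonempty

/-- Two gaps are linked: they contain a linked pair of boundary leaves. -/
def GapsLinked (G1 G2 : Set GoodInt) : Prop :=
  ∃ I1 ∈ G1, ∃ I2 ∈ G2, LeavesLinked I1 I2

/-- Gaps `G1`, `G2` cross: there are distinct pairs `{I₁, J₁} ⊆ G1`,
`{I₂, J₂} ⊆ G2` such that for each `i`, the vertex set of the other gap is
contained in `Iᵢ ∪ Jᵢ` and meets `Iᵢ` in exactly one point. -/
def GapsCross (G1 G2 : Set GoodInt) : Prop :=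
  ∃ I1 ∈ G1, ∃ J1 ∈ G1, ∃ I2 ∈ G2, ∃ J2 ∈ G2,
    I1.carrier ⊂ J1.dual.carrier ∧ I2.carrier ⊂ J2.dual.carrier ∧
    gapVerts G2 ⊆ I1.carrier ∪ J1.carrier ∧
    (∃! x : S1, x ∈ I1.carrier ∩ gapVerts G2) ∧
    gapVerts G1 ⊆ I2.carrier ∪ J2.carrier ∧
    (∃! x : S1, x ∈ I2.carrier ∩ gapVerts G1)

/-- The Baumslag–Solitar group `BS(m,n) = ⟨a, b | b aᵐ b⁻¹ = aⁿ⟩`,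
with `a = FreeGroup.of false` and `b = FreeGroup.of true`. -/
abbrev BSGroup (m n : ℤ) : Type :=
  PresentedGroup
    ({FreeGroup.of true * FreeGroup.of false ^ m * (FreeGroup.of true)⁻¹ *
        (FreeGroup.of false ^ n)⁻¹} : Set (FreeGroup Bool))

/-! ### Coordinates on the circle cut open at a point -/

/-- A coordinate on the circle cut open at `p`: a bijection `e : S¹ → [0, 1)` sending `p` to `0`
and turning the circular order into the cyclic order of `[0, 1)`. -/
structure Coord (p : S1) where
  e : S1 → ℝ
  inj : Function.Injective e
  base : e p = 0
  nonneg : ∀ x, 0 ≤ e x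
  lt_one : ∀ x, e x < 1
  surj : ∀ r : ℝ, 0 ≤ r → r < 1 → ∃ x, e x = r
  sbtw_iff : ∀ x y z : S1, sbtw x y z ↔
    (e x < e y ∧ e y < e z) ∨ (e y < e z ∧ e z < e x) ∨ (e z < e x ∧ e x < e y)

lemma toIcoMod_near {a b : ℝ} (h1 : b < a + 1) (h2 : a < b + 1) :
    toIcoMod one_pos a b = if a ≤ b then b else b + 1 := by
  split_ifs with h
  · rw [toIcoMod_eq_iff]; exact ⟨⟨h, h1⟩, 0, by simp⟩
  · rw [toIcoMod_eq_iff]; exact ⟨⟨by linarith, by linarith⟩, -1, by simp⟩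

lemma toIocMod_near {a b : ℝ} (h1 : b < a + 1) (h2 : a < b + 1) :
    toIocMod one_pos a b = if a < b then b else b + 1 := by
  split_ifs with h
  · rw [toIocMod_eq_iff]; exact ⟨⟨h, h1.le⟩, 0, by simp⟩
  · rw [toIocMod_eq_iff]; exact ⟨⟨by linarith, by linarith⟩, -1, by simp⟩

lemma btw_coe_near {a b c : ℝ} (h1 : b < a + 1) (h2 : a < b + 1) (h3 : c < a + 1)
    (h4 : a < c + 1) :
    btw (a : S1) (b : S1) (c : S1) ↔
      (if a ≤ b then b else b + 1) ≤ (if a < c then c else c + 1) := by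
  rw [← toIcoMod_near h1 h2, ← toIocMod_near h3 h4]
  exact QuotientAddGroup.btw_coe_iff

lemma exists_coord (p : S1) : Nonempty (Coord p) := by
  obtain ⟨r, rfl⟩ : ∃ r : ℝ, (r : S1) = p := QuotientAddGroup.mk_surjective p
  let f := AddCircle.equivIco (1 : ℝ) r
  have hf : ∀ x, ((f x : ℝ) : S1) = x := fun x => AddCircle.coe_equivIco
  have hm : ∀ x, r ≤ (f x : ℝ) ∧ (f x : ℝ) < r + 1 := fun x => (f x).2
  refine ⟨⟨fun x => (f x : ℝ) - r, ?_, ?_, ?_, ?_, ?_, ?_⟩⟩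
  · intro x y h
    apply f.injective
    apply Subtype.ext
    simpa using h
  · have : (f (r : S1) : ℝ) = r := AddCircle.equivIco_coe_of_mem (p := (1 : ℝ)) ⟨le_rfl, by linarith⟩
    simp [this]
  · intro x; have := hm x; linarith
  · intro x; have := hm x; linarith
  · intro s h0 h1
    refine ⟨((s + r : ℝ) : S1), ?_⟩
    have : (f ((s + r : ℝ) : S1) : ℝ) = s + r :=
      AddCircle.equivIco_coe_of_mem (p := (1 : ℝ)) ⟨by linarith, by linarith⟩
    rw [this]; ring
  · intro x y z
    have hx := hm x
    have hy := hm y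
    have hz := hm z
    rw [sbtw_iff_not_btw]
    have key := btw_coe_near (a := f z) (b := f y) (c := f x) (by linarith) (by linarith)
      (by linarith) (by linarith)
    rw [hf, hf, hf] at key
    rw [key]
    generalize (f x : ℝ) = x' at *
    generalize (f y : ℝ) = y' at *
    generalize (f z : ℝ) = z' at *
    constructor
    · intro h
      split_ifs at h <;> grind
    · intro h
      split_ifs <;> grind

namespace Coord

variable {p : S1} (c : Coord p)

/-- The interval `I` is positive if its endpoints are in increasing order for the coordinate. It then
does not contain the base point, though the base point may be its left endpoint. -/
def Pos (I : GoodInt) : Prop := c.e I.a < c.e I.b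

lemma ne_of {x y : S1} (h : x ≠ y) : c.e x ≠ c.e y := fun h' => h (c.inj h')

lemma pos_of_ne {x : S1} (h : x ≠ p) : 0 < c.e x :=
  lt_of_le_of_ne (c.nonneg x) (fun h' => h (c.inj (by rw [c.base, ← h'])))

lemma pos_or_dual (I : GoodInt) : c.Pos I ∨ c.Pos I.dual :=
  lt_or_gt_of_ne (c.ne_of I.ne)

lemma mem_pos {I : GoodInt} (h : c.Pos I) (z : S1) :
    z ∈ I.carrier ↔ c.e I.a < c.e z ∧ c.e z < c.e I.b := by
  unfold Pos at h
  show sbtw I.a z I.b ↔ _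
  rw [c.sbtw_iff]
  constructor
  · rintro (h1 | h1 | h1)
    · exact h1
    · linarith
    · linarith
  · exact Or.inl

lemma mem_neg {I : GoodInt} (h : c.Pos I) (z : S1) :
    z ∈ I.dual.carrier ↔ c.e z < c.e I.a ∨ c.e I.b < c.e z := by
  unfold Pos at h
  show sbtw I.b z I.a ↔ _
  rw [c.sbtw_iff]
  constructor
  · rintro (h1 | h1 | h1)
    · linarith
    · exact Or.inl h1.1
    · exact Or.inr h1.2
  · rintro (h1 | h1)
    · exact Or.inr (Or.inl ⟨h1, h⟩)
    · exact Or.inr (Or.inr ⟨h, h1⟩)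

lemma exists_between {r s : ℝ} (hr : 0 ≤ r) (hs : s ≤ 1) (h : r < s) :
    ∃ x, r < c.e x ∧ c.e x < s := by
  obtain ⟨x, hx⟩ := c.surj ((r + s) / 2) (by linarith) (by linarith)
  exact ⟨x, by linarith, by linarith⟩

lemma sub_pos {I J : GoodInt} (hI : c.Pos I) (hJ : c.Pos J) :
    I.carrier ⊆ J.carrier ↔ c.e J.a ≤ c.e I.a ∧ c.e I.b ≤ c.e J.b := by
  constructor
  · intro h
    have hI' : c.e I.a < c.e I.b := hI
    constructor
    · by_contra! h1
      obtain ⟨x, h2, h3⟩ := c.exists_between (c.nonneg I.a)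
        (le_trans (min_le_left _ _) (c.lt_one I.b).le) (lt_min hI' h1)
      have := (c.mem_pos hJ x).1 (h ((c.mem_pos hI x).2 ⟨h2, h3.trans_le (min_le_left _ _)⟩))
      have := h3.trans_le (min_le_right _ _)
      linarith
    · by_contra! h1
      obtain ⟨x, h2, h3⟩ := c.exists_between (le_trans (c.nonneg I.a) (le_max_left _ _))
        (c.lt_one I.b).le (max_lt hI' h1)
      have := (c.mem_pos hJ x).1 (h ((c.mem_pos hI x).2 ⟨(le_max_left _ _).trans_lt h2, h3⟩))
      have := (le_max_right _ _).trans_lt h2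
      linarith
  · rintro ⟨h1, h2⟩ z hz
    rw [c.mem_pos hI] at hz
    rw [c.mem_pos hJ]
    exact ⟨by linarith, by linarith⟩

lemma ext_e {I J : GoodInt} (h1 : c.e I.a = c.e J.a) (h2 : c.e I.b = c.e J.b) : I = J := by
  have ha := c.inj h1
  have hb := c.inj h2
  cases I; cases J; simp_all

/-- The dual of a positive interval has points with coordinate arbitrarily close to `1`, so it is not
contained in a positive interval. -/
lemma not_pos_sub {I J : GoodInt} (hI : c.Pos I) (hJ : c.Pos J) :
    ¬ I.dual.carrier ⊆ J.carrier := by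
  intro h
  obtain ⟨x, h2, h3⟩ := c.exists_between
    (le_trans (c.nonneg I.b) (le_max_left _ (c.e J.b))) le_rfl (max_lt (c.lt_one _) (c.lt_one _))
  have := (c.mem_pos hJ x).1 (h ((c.mem_neg hI x).2 (Or.inr ((le_max_left _ _).trans_lt h2))))
  have := (le_max_right _ _).trans_lt h2
  linarith

lemma carrier_inj_pos {I J : GoodInt} (hI : c.Pos I) (h : I.carrier = J.carrier) : I = J := by
  rcases c.pos_or_dual J with hJ | hJ
  · have h1 := (c.sub_pos hI hJ).1 h.subset
    have h2 := (c.sub_pos hJ hI).1 h.symm.subset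
    exact c.ext_e (le_antisymm h2.1 h1.1) (le_antisymm h1.2 h2.2)
  · exact absurd h.symm.subset (c.not_pos_sub hJ hI)

end Coord

/-- An interval is determined by its carrier: cut the circle open at the left endpoint of one of
the two intervals. -/
lemma carrier_inj {I J : GoodInt} (h : I.carrier = J.carrier) : I = J := by
  obtain ⟨c⟩ := exists_coord I.a
  have hI : c.Pos I := by
    unfold Coord.Pos
    rw [c.base]; exact c.pos_of_ne I.ne.symm
  exact c.carrier_inj_pos hI h

namespace Coord

variable {p : S1} (c : Coord p)

lemma unlinked {L : LamSys} {I J : GoodInt} (hI : I ∈ L.mem) (hJ : J ∈ L.mem)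
    (h1 : c.e I.a < c.e J.a) (h2 : c.e J.a < c.e I.b) (h3 : c.e I.b < c.e J.b) : False := by
  have pI : c.Pos I := h1.trans h2
  have pJ : c.Pos J := h2.trans h3
  rcases L.unlinked I hI J hJ with h | h | h | h
  · have := (c.sub_pos pI pJ).1 h; linarith
  · exact c.not_pos_sub pI pJ h
  · obtain ⟨x, hx1, hx2⟩ := c.exists_between (c.nonneg _) (c.lt_one _).le h2
    have := (c.mem_neg pJ x).1 (h ((c.mem_pos pI x).2 ⟨by linarith, by linarith⟩))
    rcases this with h | h <;> linarith
  · obtain ⟨x, hx1, hx2⟩ := c.exists_between (c.nonneg _) (c.lt_one _).le h3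
    have := (c.mem_neg pJ x).1 (h ((c.mem_neg pI x).2 (Or.inr hx1)))
    rcases this with h | h <;> linarith

lemma disj {I J : GoodInt} (hI : c.Pos I) (hJ : c.Pos J) (h : c.e I.b ≤ c.e J.a) :
    Disjoint I.carrier J.carrier := by
  rw [Set.disjoint_left]
  intro x hx hy
  rw [c.mem_pos hI] at hx
  rw [c.mem_pos hJ] at hy
  linarith

/-- Maximal leaf intervals exist above any given one, subject to a closed constraint on the
endpoints which keeps the right endpoint away from the cut point. -/
lemma exists_max (L : LamSys) (C : Set (ℝ × ℝ)) (hC : IsClosed C) {u : ℝ} (hu : u < 1)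
    (hCu : ∀ q ∈ C, q.2 ≤ u) {K₀ : GoodInt} (hK₀ : K₀ ∈ L.mem) (pK₀ : c.Pos K₀)
    (hK₀C : (c.e K₀.a, c.e K₀.b) ∈ C) :
    ∃ K ∈ L.mem, c.e K.a ≤ c.e K₀.a ∧ c.e K₀.b ≤ c.e K.b ∧ (c.e K.a, c.e K.b) ∈ C ∧
      ∀ K' ∈ L.mem, (c.e K'.a, c.e K'.b) ∈ C → c.e K'.a ≤ c.e K.a → c.e K.b ≤ c.e K'.b →
        K' = K := by
  have pK₀' : c.e K₀.a < c.e K₀.b := pK₀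
  set N : Set GoodInt := {K | K ∈ L.mem ∧ c.e K.a ≤ c.e K₀.a ∧ c.e K₀.b ≤ c.e K.b ∧
    (c.e K.a, c.e K.b) ∈ C} with hN
  -- Elements of `N` are compared by length, since they form a chain.
  set w : GoodInt → ℝ := fun K => c.e K.b - c.e K.a with hw
  have hne : (w '' N).Nonempty := ⟨_, K₀, ⟨hK₀, le_rfl, le_rfl, hK₀C⟩, rfl⟩
  have hbd : BddAbove (w '' N) := by
    refine ⟨1, ?_⟩
    rintro _ ⟨K, hK, rfl⟩
    have := c.nonneg K.a
    have := c.lt_one K.b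
    simp only [hw]; linarith
  have chain : ∀ K ∈ N, ∀ K' ∈ N, w K ≤ w K' → c.e K'.a ≤ c.e K.a ∧ c.e K.b ≤ c.e K'.b := by
    rintro K ⟨h1, h2, h3, h4⟩ K' ⟨h1', h2', h3', h4'⟩ hle
    simp only [hw] at hle
    have u1 := c.unlinked (L := L) h1 h1'
    have u2 := c.unlinked (L := L) h1' h1
    constructor
    · by_contra! hlt
      exact u1 hlt (by linarith) (by linarith)
    · by_contra! hlt
      exact u2 (by linarith) (by linarith) hlt
  obtain ⟨v, vmono, vlim, vmem⟩ := exists_seq_tendsto_sSup hne hbd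
  choose J hJN hJw using vmem
  have hstep : ∀ n m, n ≤ m → c.e (J m).a ≤ c.e (J n).a ∧ c.e (J n).b ≤ c.e (J m).b := by
    intro n m hnm
    apply chain _ (hJN n) _ (hJN m)
    rw [hJw, hJw]; exact vmono hnm
  have amono : Antitone (fun n => c.e (J n).a) := fun n m h => (hstep n m h).1
  have bmono : Monotone (fun n => c.e (J n).b) := fun n m h => (hstep n m h).2
  have alim := tendsto_atTop_ciInf amono ⟨0, by rintro _ ⟨n, rfl⟩; exact c.nonneg _⟩
  have bbd : BddAbove (range fun n => c.e (J n).b) :=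
    ⟨1, by rintro _ ⟨n, rfl⟩; exact (c.lt_one _).le⟩
  have blim := tendsto_atTop_ciSup bmono bbd
  set α := ⨅ n, c.e (J n).a with hα
  set β := ⨆ n, c.e (J n).b with hβ
  have hαC : (α, β) ∈ C := hC.mem_of_tendsto (alim.prodMk_nhds blim)
    (Eventually.of_forall fun n => (hJN n).2.2.2)
  have hαle : ∀ n, α ≤ c.e (J n).a := fun n => amono.le_of_tendsto alim n
  have hβle : ∀ n, c.e (J n).b ≤ β := fun n => bmono.ge_of_tendsto blim n
  have hα0 : 0 ≤ α := ge_of_tendsto' alim fun n => c.nonneg _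
  have hβ1 : β < 1 := (hCu _ hαC).trans_lt hu
  have hαK : α ≤ c.e K₀.a := (hαle 0).trans (hJN 0).2.1
  have hβK : c.e K₀.b ≤ β := (hJN 0).2.2.1.trans (hβle 0)
  obtain ⟨x, hx⟩ := c.surj α hα0 (by linarith)
  obtain ⟨y, hy⟩ := c.surj β (by linarith) hβ1
  have hxy : x ≠ y := by rintro rfl; linarith
  have pJ : ∀ n, c.Pos (J n) := fun n =>
    lt_of_le_of_lt (hJN n).2.1 (lt_of_lt_of_le pK₀ (hJN n).2.2.1)
  have pK : c.Pos ⟨x, y, hxy⟩ := by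
    show c.e x < c.e y
    linarith
  have hKL : (⟨x, y, hxy⟩ : GoodInt) ∈ L.mem := by
    refine L.chain_closed J (fun n => (hJN n).1)
      (fun n => (c.sub_pos (pJ _) (pJ _)).2 (hstep n (n + 1) (Nat.le_succ n))) _ ?_
    ext z
    rw [c.mem_pos pK, Set.mem_iUnion]
    constructor
    · rintro ⟨h1, h2⟩
      replace h1 : α < c.e z := by simpa [hx] using h1
      replace h2 : c.e z < β := by simpa [hy] using h2
      have e1 := alim.eventually (gt_mem_nhds h1)
      have e2 := blim.eventually (lt_mem_nhds h2)
      obtain ⟨n, h3, h4⟩ := (e1.and e2).exists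
      exact ⟨n, (c.mem_pos (pJ n) z).2 ⟨h3, h4⟩⟩
    · rintro ⟨n, hn⟩
      rw [c.mem_pos (pJ n)] at hn
      have := hαle n
      have := hβle n
      constructor
      · show c.e x < _
        linarith
      · show _ < c.e y
        linarith
  refine ⟨⟨x, y, hxy⟩, hKL, ?_, ?_, ?_, ?_⟩
  · simpa [hx] using hαK
  · simpa [hy] using hβK
  · simpa [hx, hy] using hαC
  · intro K' hK' hK'C h1 h2
    simp only [hx, hy] at h1 h2
    have hK'N : K' ∈ N := ⟨hK', by linarith, by linarith, hK'C⟩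
    have hle : w K' ≤ β - α :=
      le_trans (le_csSup hbd ⟨K', hK'N, rfl⟩)
        (le_of_tendsto' vlim fun n => by
          have := hαle n
          have := hβle n
          rw [← hJw n]; simp only [hw]; linarith)
    simp only [hw] at hle
    apply c.ext_e
    · show _ = c.e x
      linarith
    · show _ = c.e y
      linarith

end Coord

/-! ### Gaps made of maximal intervals -/

namespace Coord

variable {p : S1} (c : Coord p)

/-- The positive leaf intervals which are maximal among those whose pair of endpoints lies in
the constraint set `C`. -/
def Mx (L : LamSys) (C : Set (ℝ × ℝ)) : Set GoodInt :=
  {K | K ∈ L.mem ∧ c.Pos K ∧ (c.e K.a, c.e K.b) ∈ C ∧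
    ∀ K' ∈ L.mem, (c.e K'.a, c.e K'.b) ∈ C → c.e K'.a ≤ c.e K.a → c.e K.b ≤ c.e K'.b → K' = K}

lemma Mx_disj {L : LamSys} {C : Set (ℝ × ℝ)} {I J : GoodInt} (hI : I ∈ c.Mx L C)
    (hJ : J ∈ c.Mx L C) (hne : I ≠ J) : Disjoint I.carrier J.carrier := by
  obtain ⟨mI, pI, cI, maxI⟩ := hI
  obtain ⟨mJ, pJ, cJ, maxJ⟩ := hJ
  have pI' : c.e I.a < c.e I.b := pI
  have pJ' : c.e J.a < c.e J.b := pJ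
  by_cases h1 : c.e I.b ≤ c.e J.a
  · exact c.disj pI pJ h1
  by_cases h2 : c.e J.b ≤ c.e I.a
  · exact (c.disj pJ pI h2).symm
  exfalso
  push Not at h1 h2
  have u1 := c.unlinked mI mJ
  have u2 := c.unlinked mJ mI
  have n1 := maxI J mJ cJ
  have n2 := maxJ I mI cI
  rcases lt_trichotomy (c.e I.a) (c.e J.a) with h | h | h
  · rcases lt_or_ge (c.e I.b) (c.e J.b) with h' | h'
    · exact u1 h h1 h'
    · exact hne (n2 h.le h')
  · rcases le_total (c.e I.b) (c.e J.b) with h' | h'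
    · exact hne (n1 h.symm.le h').symm
    · exact hne (n2 h.le h')
  · rcases lt_or_ge (c.e J.b) (c.e I.b) with h' | h'
    · exact u2 h h2 h'
    · exact hne (n1 h.le h').symm

lemma exists_Mx (L : LamSys) {C : Set (ℝ × ℝ)} (hC : IsClosed C) {u : ℝ} (hu : u < 1)
    (hCu : ∀ q ∈ C, q.2 ≤ u) {K₀ : GoodInt} (hK₀ : K₀ ∈ L.mem) (pK₀ : c.Pos K₀)
    (hK₀C : (c.e K₀.a, c.e K₀.b) ∈ C) : ∃ K ∈ c.Mx L C, K₀.carrier ⊆ K.carrier := by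
  obtain ⟨K, h1, h2, h3, h4, h5⟩ := c.exists_max L C hC hu hCu hK₀ pK₀ hK₀C
  have pK : c.Pos K := lt_of_le_of_lt h2 (lt_of_lt_of_le pK₀ h3)
  exact ⟨K, ⟨h1, pK, h4, h5⟩, (c.sub_pos pK₀ pK).2 ⟨h2, h3⟩⟩

/-- To prove that every leaf lies on an element of `G` it suffices to treat positive
representatives. -/
lemma covers_of_pos {L : LamSys} {G : Set GoodInt}
    (h : ∀ I ∈ L.mem, c.Pos I → ∃ J ∈ G, I.carrier ⊆ J.carrier ∨ I.dual.carrier ⊆ J.carrier) :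
    ∀ I ∈ L.mem, ∃ J ∈ G, I.carrier ⊆ J.carrier ∨ I.dual.carrier ⊆ J.carrier := by
  intro I hI
  rcases c.pos_or_dual I with hp | hp
  · exact h I hI hp
  · obtain ⟨J, hJ, h'⟩ := h _ (L.dual_mem I hI) hp
    exact ⟨J, hJ, h'.symm⟩

lemma base_not_mem {I : GoodInt} (hI : c.Pos I) : p ∉ I.carrier := by
  rw [c.mem_pos hI, c.base]
  intro h
  have := c.nonneg I.a
  linarith

/-! ### The cut point is not the endpoint of a leaf -/

/-- `x` is joined to `p` by a leaf of `L`. -/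
def Joined (_c : Coord p) (L : LamSys) (x : S1) : Prop := ∃ h : p ≠ x, (⟨p, x, h⟩ : GoodInt) ∈ L.mem

/-- The constraint on the endpoints of a positive interval saying that it is contained in
`(x, z)`. -/
def box (x z : S1) : Set (ℝ × ℝ) := {q | c.e x ≤ q.1 ∧ q.2 ≤ c.e z}

lemma box_closed (x z : S1) : IsClosed (c.box x z) :=
  (isClosed_le continuous_const continuous_fst).inter
    (isClosed_le continuous_snd continuous_const)

/-- The collection consisting of the two leaves joining `p` to `x` and `z`, and of the maximal
leaves lying on `(x, z)`. -/
def fan (L : LamSys) (x z : S1) (hx : p ≠ x) (hz : p ≠ z) : Set GoodInt :=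
  {⟨z, p, hz.symm⟩, ⟨p, x, hx⟩} ∪ c.Mx L (c.box x z)

lemma pos_base {x : S1} (hx : p ≠ x) : c.Pos ⟨p, x, hx⟩ := by
  show c.e p < c.e x
  rw [c.base]; exact c.pos_of_ne hx.symm

lemma mem_to_base {x : S1} (hx : p ≠ x) (y : S1) :
    y ∈ (⟨x, p, hx.symm⟩ : GoodInt).carrier ↔ c.e x < c.e y := by
  have := c.mem_neg (c.pos_base hx) y
  rw [show (⟨x, p, hx.symm⟩ : GoodInt) = GoodInt.dual ⟨p, x, hx⟩ from rfl, this]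
  have h1 := c.nonneg y
  simp only [c.base]
  constructor
  · rintro (h | h)
    · linarith
    · exact h
  · exact Or.inr

lemma fan_gap {L : LamSys} {x z : S1} (hx : p ≠ x) (hz : p ≠ z)
    (mx : (⟨p, x, hx⟩ : GoodInt) ∈ L.mem) (mz : (⟨p, z, hz⟩ : GoodInt) ∈ L.mem)
    (hxz : c.e x < c.e z) (hno : ∀ y, c.e x < c.e y → c.e y < c.e z → ¬ c.Joined L y) :
    L.IsGap (c.fan L x z hx hz) := by
  have x0 := c.pos_of_ne hx.symm
  refine ⟨?_, ?_, ?_⟩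
  · rintro K ((rfl | rfl) | hK)
    · exact L.dual_mem _ mz
    · exact mx
    · exact hK.1
  · have d1 : Disjoint (⟨z, p, hz.symm⟩ : GoodInt).carrier (⟨p, x, hx⟩ : GoodInt).carrier := by
      rw [Set.disjoint_left]
      intro y hy hy'
      rw [c.mem_to_base hz] at hy
      have := ((c.mem_pos (c.pos_base hx) y).1 hy').2
      change c.e y < c.e x at this
      linarith
    have d2 : ∀ K ∈ c.Mx L (c.box x z),
        Disjoint (⟨z, p, hz.symm⟩ : GoodInt).carrier K.carrier := by
      intro K hK
      rw [Set.disjoint_left]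
      intro y hy hy'
      rw [c.mem_to_base hz] at hy
      have h1 := ((c.mem_pos hK.2.1 y).1 hy').2
      have h2 : c.e K.b ≤ c.e z := hK.2.2.1.2
      linarith
    have d3 : ∀ K ∈ c.Mx L (c.box x z),
        Disjoint (⟨p, x, hx⟩ : GoodInt).carrier K.carrier := by
      intro K hK
      exact c.disj (c.pos_base hx) hK.2.1 hK.2.2.1.1
    rintro I ((rfl | rfl) | hI) J ((rfl | rfl) | hJ) hne
    · exact absurd rfl hne
    · exact d1
    · exact d2 J hJ
    · exact d1.symm
    · exact absurd rfl hne
    · exact d3 J hJ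
    · exact (d2 I hI).symm
    · exact (d3 I hI).symm
    · exact c.Mx_disj hI hJ hne
  · apply c.covers_of_pos
    intro K mK pK
    have pK' : c.e K.a < c.e K.b := pK
    have onx : c.e K.b ≤ c.e x → ∃ J ∈ c.fan L x z hx hz,
        K.carrier ⊆ J.carrier ∨ K.dual.carrier ⊆ J.carrier := fun h =>
      ⟨_, Or.inl (Or.inr rfl), Or.inl ((c.sub_pos pK (c.pos_base hx)).2
        ⟨by rw [c.base]; exact c.nonneg _, h⟩)⟩
    by_cases ha : K.a = p
    · have hb : p ≠ K.b := by rw [← ha]; exact K.ne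
      have hj : c.Joined L K.b := ⟨hb, by
        have : K = ⟨p, K.b, hb⟩ := by cases K; simp_all
        rwa [← this]⟩
      by_cases h1 : c.e K.b ≤ c.e x
      · exact onx h1
      · have h2 : c.e z ≤ c.e K.b := by
          by_contra! h2
          exact hno _ (not_le.1 h1) h2 hj
        refine ⟨_, Or.inl (Or.inl rfl), Or.inr ?_⟩
        intro y hy
        rw [c.mem_neg pK, ha, c.base] at hy
        rw [c.mem_to_base hz]
        have := c.nonneg y
        rcases hy with hy | hy <;> linarith
    · have ha0 := c.pos_of_ne ha
      have ux := c.unlinked mx mK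
      have uz := c.unlinked mz mK
      simp only [c.base] at ux uz
      by_cases h1 : c.e K.b ≤ c.e x
      · exact onx h1
      by_cases h2 : c.e z ≤ c.e K.a
      · refine ⟨_, Or.inl (Or.inl rfl), Or.inl ?_⟩
        intro y hy
        rw [c.mem_pos pK] at hy
        rw [c.mem_to_base hz]
        linarith
      push Not at h1 h2
      have hin : (c.e K.a, c.e K.b) ∈ c.box x z := by
        refine ⟨?_, ?_⟩ <;> by_contra! h
        · exact ux ha0 h h1
        · exact uz ha0 h2 h
      obtain ⟨J, hJ, h⟩ := c.exists_Mx L (c.box_closed x z) (c.lt_one z) (fun q hq => hq.2)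
        mK pK hin
      exact ⟨J, Or.inr hJ, Or.inl h⟩

lemma fan_not_leaf {L : LamSys} {x z : S1} (hx : p ≠ x) (hz : p ≠ z)
    (hxz : c.e x < c.e z) : ¬ IsLeafGap (c.fan L x z hx hz) := by
  rintro ⟨I, hI⟩
  have h1 : (⟨z, p, hz.symm⟩ : GoodInt) ∈ c.fan L x z hx hz := Or.inl (Or.inl rfl)
  have h2 : (⟨p, x, hx⟩ : GoodInt) ∈ c.fan L x z hx hz := Or.inl (Or.inr rfl)
  have hxz' : x ≠ z := by rintro rfl; exact lt_irrefl _ hxz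
  rw [hI] at h1 h2
  rcases h1 with rfl | h1 <;> rcases h2 with h2 | h2
  · injection h2 with h2 h3; exact hz h2
  · injection h2 with h2 h3; exact hxz' h3
  · rw [← h2] at h1; injection h1 with h1 h3; exact hxz' h1.symm
  · have h2' : (⟨p, x, hx⟩ : GoodInt) = I.dual := h2
    rw [← h2'] at h1; injection h1 with h1 h3; exact hz h1.symm

lemma fan_base {L : LamSys} {x z : S1} (hx : p ≠ x) (hz : p ≠ z) :
    p ∈ gapVerts (c.fan L x z hx hz) := by
  unfold gapVerts
  rw [Set.mem_compl_iff, Set.mem_iUnion₂]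
  rintro ⟨K, (rfl | rfl) | hK, hp⟩
  · rw [c.mem_to_base hz, c.base] at hp
    have := c.nonneg z
    linarith
  · exact c.base_not_mem (c.pos_base hx) hp
  · exact c.base_not_mem hK.2.1 hp

/-- In a loose lamination system there is at most one bounded complementary component of the set
of points joined to `p`, since each one carries a non-leaf gap with vertex `p`. -/
lemma loose_joined {L : LamSys} (hL : L.Loose) {x₁ z₁ x₂ z₂ : S1}
    (jx₁ : c.Joined L x₁) (jz₁ : c.Joined L z₁) (jx₂ : c.Joined L x₂) (jz₂ : c.Joined L z₂)
    (h₁ : c.e x₁ < c.e z₁) (h₁₂ : c.e z₁ ≤ c.e x₂) (h₂ : c.e x₂ < c.e z₂)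
    (n₁ : ∀ y, c.e x₁ < c.e y → c.e y < c.e z₁ → ¬ c.Joined L y)
    (n₂ : ∀ y, c.e x₂ < c.e y → c.e y < c.e z₂ → ¬ c.Joined L y) : False := by
  obtain ⟨hx₁, mx₁⟩ := jx₁
  obtain ⟨hz₁, mz₁⟩ := jz₁
  obtain ⟨hx₂, mx₂⟩ := jx₂
  obtain ⟨hz₂, mz₂⟩ := jz₂
  have g₁ := c.fan_gap hx₁ hz₁ mx₁ mz₁ h₁ n₁
  have g₂ := c.fan_gap hx₂ hz₂ mx₂ mz₂ h₂ n₂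
  refine Set.disjoint_left.1 (hL _ _ g₁ g₂ (c.fan_not_leaf hx₁ hz₁ h₁)
    (c.fan_not_leaf hx₂ hz₂ h₂) ?_) (c.fan_base hx₁ hz₁) (c.fan_base hx₂ hz₂)
  intro heq
  have m1 : (⟨p, x₁, hx₁⟩ : GoodInt) ∈ c.fan L x₁ z₁ hx₁ hz₁ := Or.inl (Or.inr rfl)
  have m2 : (⟨p, x₂, hx₂⟩ : GoodInt) ∈ c.fan L x₁ z₁ hx₁ hz₁ := by
    rw [heq]; exact Or.inl (Or.inr rfl)
  have hd := g₁.2.1 _ m1 _ m2 (by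
    intro h; injection h with _ h; rw [h] at h₁; linarith)
  obtain ⟨y, hy1, hy2⟩ := c.exists_between le_rfl (c.lt_one x₁).le (c.pos_of_ne hx₁.symm)
  refine Set.disjoint_left.1 hd ((c.mem_pos (c.pos_base hx₁) y).2 ?_)
    ((c.mem_pos (c.pos_base hx₂) y).2 ?_)
  · exact ⟨by rw [c.base]; exact hy1, hy2⟩
  · refine ⟨by rw [c.base]; exact hy1, ?_⟩
    show c.e y < c.e x₂
    linarith

/-- The set of points joined to `p` is closed under increasing limits. -/
lemma joined_sup {L : LamSys} {v : ℕ → ℝ} (hv : Monotone v) {x : S1}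
    (hlim : Tendsto v atTop (𝓝 (c.e x))) (hJ : ∀ n, ∃ y, c.Joined L y ∧ c.e y = v n) :
    c.Joined L x := by
  choose y hy hyv using hJ
  have hle : ∀ n, v n ≤ c.e x := fun n => hv.ge_of_tendsto hlim n
  have hne : p ≠ x := by
    rintro rfl
    have h1 := c.pos_of_ne (hy 0).1.symm
    have h2 := hle 0
    rw [c.base, ← hyv] at h2
    linarith
  refine ⟨hne, L.chain_closed (fun n => ⟨p, y n, (hy n).1⟩) (fun n => (hy n).2) ?_ _ ?_⟩
  · intro n
    refine (c.sub_pos (c.pos_base _) (c.pos_base _)).2 ⟨le_rfl, ?_⟩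
    show c.e (y n) ≤ c.e (y (n + 1))
    rw [hyv, hyv]; exact hv (Nat.le_succ n)
  · ext z
    rw [c.mem_pos (c.pos_base hne), Set.mem_iUnion]
    constructor
    · rintro ⟨h1, h2⟩
      obtain ⟨n, hn⟩ := (hlim.eventually (lt_mem_nhds h2)).exists
      refine ⟨n, (c.mem_pos (c.pos_base _) z).2 ⟨h1, ?_⟩⟩
      show c.e z < c.e (y n)
      rwa [hyv]
    · rintro ⟨n, hn⟩
      rw [c.mem_pos (c.pos_base _)] at hn
      refine ⟨hn.1, ?_⟩
      have h3 : c.e z < c.e (y n) := hn.2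
      rw [hyv] at h3
      exact h3.trans_le (hle n)

/-- The set of points joined to `p` is closed under decreasing limits other than `p`. -/
lemma joined_inf {L : LamSys} {v : ℕ → ℝ} (hv : Antitone v) {x : S1} (hne : p ≠ x)
    (hlim : Tendsto v atTop (𝓝 (c.e x))) (hJ : ∀ n, ∃ y, c.Joined L y ∧ c.e y = v n) :
    c.Joined L x := by
  choose y hy hyv using hJ
  have hle : ∀ n, c.e x ≤ v n := fun n => hv.le_of_tendsto hlim n
  have key : (⟨x, p, hne.symm⟩ : GoodInt) ∈ L.mem := by
    refine L.chain_closed (fun n => ⟨y n, p, (hy n).1.symm⟩)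
      (fun n => L.dual_mem _ (hy n).2) ?_ _ ?_
    · intro n z hz
      rw [c.mem_to_base (hy n).1, hyv] at hz
      rw [c.mem_to_base (hy (n + 1)).1, hyv]
      exact (hv (Nat.le_succ n)).trans_lt hz
    · ext z
      rw [c.mem_to_base hne, Set.mem_iUnion]
      constructor
      · intro h2
        obtain ⟨n, hn⟩ := (hlim.eventually (gt_mem_nhds h2)).exists
        refine ⟨n, (c.mem_to_base (hy n).1 z).2 ?_⟩
        rwa [hyv]
      · rintro ⟨n, hn⟩
        rw [c.mem_to_base (hy n).1, hyv] at hn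
        exact (hle n).trans_lt hn
  exact ⟨hne, L.dual_mem _ key⟩

/-- A point not joined to `p`, but separated from `p` on both sides by points which are, lies in
a bounded complementary component of the set of joined points, whose endpoints are joined to
`p`. -/
lemma component {L : LamSys} {x₀ y x₁ : S1} (j₀ : c.Joined L x₀) (j₁ : c.Joined L x₁)
    (hy : ¬ c.Joined L y) (h₀ : c.e x₀ < c.e y) (h₁ : c.e y < c.e x₁) :
    ∃ x z, c.Joined L x ∧ c.Joined L z ∧ c.e x₀ ≤ c.e x ∧ c.e x < c.e z ∧ c.e z ≤ c.e x₁ ∧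
      ∀ w, c.e x < c.e w → c.e w < c.e z → ¬ c.Joined L w := by
  set A : Set ℝ := {r | r ≤ c.e y ∧ ∃ w, c.Joined L w ∧ c.e w = r} with hA
  set B : Set ℝ := {r | c.e y ≤ r ∧ ∃ w, c.Joined L w ∧ c.e w = r} with hB
  have neA : A.Nonempty := ⟨_, h₀.le, x₀, j₀, rfl⟩
  have neB : B.Nonempty := ⟨_, h₁.le, x₁, j₁, rfl⟩
  have bdA : BddAbove A := ⟨_, fun r hr => hr.1⟩
  have bdB : BddBelow B := ⟨_, fun r hr => hr.1⟩
  have leA : c.e x₀ ≤ sSup A := le_csSup bdA ⟨h₀.le, x₀, j₀, rfl⟩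
  have leB : sInf B ≤ c.e x₁ := csInf_le bdB ⟨h₁.le, x₁, j₁, rfl⟩
  have Ale : sSup A ≤ c.e y := csSup_le neA fun r hr => hr.1
  have Ble : c.e y ≤ sInf B := le_csInf neB fun r hr => hr.1
  obtain ⟨x, hx⟩ := c.surj (sSup A) ((c.nonneg _).trans leA) (Ale.trans_lt (c.lt_one _))
  obtain ⟨z, hz⟩ := c.surj (sInf B) ((c.nonneg _).trans Ble) (leB.trans_lt (c.lt_one _))
  have jx : c.Joined L x := by
    obtain ⟨v, vm, vl, vA⟩ := exists_seq_tendsto_sSup neA bdA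
    exact c.joined_sup vm (by rwa [hx]) fun n => (vA n).2
  have jz : c.Joined L z := by
    obtain ⟨v, vm, vl, vB⟩ := exists_seq_tendsto_sInf neB bdB
    refine c.joined_inf vm ?_ (by rwa [hz]) fun n => (vB n).2
    rintro rfl
    rw [c.base] at hz
    have := c.nonneg x₀
    linarith
  have xy : c.e x < c.e y := by
    refine lt_of_le_of_ne (by linarith) fun h => hy ?_
    rwa [← c.inj h]
  refine ⟨x, z, jx, jz, by linarith, by linarith, by linarith, ?_⟩
  intro w hw1 hw2 jw
  rcases le_total (c.e w) (c.e y) with h | h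
  · have := le_csSup bdA (show c.e w ∈ A from ⟨h, w, jw, rfl⟩)
    linarith
  · have := csInf_le bdB (show c.e w ∈ B from ⟨h, w, jw, rfl⟩)
    linarith

/-- In a loose lamination system, two non-joined points cannot interlace with three joined points,
since they would lie in two distinct bounded complementary components. -/
lemma no_alternation {L : LamSys} (hL : L.Loose) {x₀ y₁ x₁ y₂ x₂ : S1}
    (j₀ : c.Joined L x₀) (n₁ : ¬ c.Joined L y₁) (j₁ : c.Joined L x₁) (n₂ : ¬ c.Joined L y₂)
    (j₂ : c.Joined L x₂) (h₁ : c.e x₀ < c.e y₁) (h₂ : c.e y₁ < c.e x₁) (h₃ : c.e x₁ < c.e y₂)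
    (h₄ : c.e y₂ < c.e x₂) : False := by
  obtain ⟨x, z, jx, jz, _, hxz, hz, no⟩ := c.component j₀ j₁ n₁ h₁ h₂
  obtain ⟨x', z', jx', jz', hx', hxz', _, no'⟩ := c.component j₁ j₂ n₂ h₃ h₄
  exact c.loose_joined hL jx jz jx' jz' hxz (hz.trans hx') hxz' no no'

end Coord

/-! ### Dynamics of a homeomorphism fixing the cut point -/

namespace Coord

variable {p : S1} (c : Coord p)

lemma map_lt {g : Equiv.Perm S1} (hg : PosHomeo g) (hp : g p = p) {x y : S1}
    (h : c.e x < c.e y) : c.e (g x) < c.e (g y) := by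
  have hy : y ≠ p := by
    rintro rfl
    have := c.nonneg x
    rw [c.base] at h; linarith
  have hgy : g y ≠ p := fun h' => hy (g.injective (h'.trans hp.symm))
  by_cases hx : x = p
  · rw [hx, hp, c.base]; exact c.pos_of_ne hgy
  · have h1 : sbtw p x y := (c.sbtw_iff _ _ _).2 (Or.inl ⟨by rw [c.base]; exact c.pos_of_ne hx, h⟩)
    have h2 := hg.2.2 _ _ _ h1
    rw [hp, c.sbtw_iff, c.base] at h2
    have := c.nonneg (g x)
    have := c.nonneg (g y)
    rcases h2 with h2 | h2 | h2
    · exact h2.2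
    · linarith
    · linarith

lemma map_le {g : Equiv.Perm S1} (hg : PosHomeo g) (hp : g p = p) {x y : S1}
    (h : c.e x ≤ c.e y) : c.e (g x) ≤ c.e (g y) := by
  rcases h.lt_or_eq with h | h
  · exact (c.map_lt hg hp h).le
  · rw [c.inj h]

lemma map_lt_iff {g : Equiv.Perm S1} (hg : PosHomeo g) (hp : g p = p) {x y : S1} :
    c.e (g x) < c.e (g y) ↔ c.e x < c.e y :=
  ⟨fun h => not_le.1 fun h' => absurd (c.map_le hg hp h') (not_le.2 h), c.map_lt hg hp⟩

/-- The intermediate value theorem for increasing bijections: a point moved forward followed by a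
point moved backward enclose a fixed point. -/
lemma fix_between {g : Equiv.Perm S1} (hm : ∀ x y, c.e (g x) < c.e (g y) ↔ c.e x < c.e y)
    {v u : S1} (hv : v ≠ p) (hvu : c.e v < c.e u) (h1 : c.e v < c.e (g v))
    (h2 : c.e (g u) < c.e u) : ∃ w, w ≠ p ∧ g w = w := by
  set S : Set ℝ := {r | r ≤ c.e u ∧ ∃ x, c.e x < c.e (g x) ∧ c.e x = r} with hS
  have ne : S.Nonempty := ⟨_, hvu.le, v, h1, rfl⟩
  have bd : BddAbove S := ⟨_, fun r hr => hr.1⟩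
  have l1 : c.e v ≤ sSup S := le_csSup bd ⟨hvu.le, v, h1, rfl⟩
  have l2 : sSup S ≤ c.e u := csSup_le ne fun r hr => hr.1
  have v0 := c.pos_of_ne hv
  obtain ⟨w, hw⟩ := c.surj (sSup S) (by linarith) (l2.trans_lt (c.lt_one u))
  have w0 : w ≠ p := by
    rintro rfl
    rw [c.base] at hw; linarith
  refine ⟨w, w0, ?_⟩
  rcases lt_trichotomy (c.e (g w)) (c.e w) with h | h | h
  · exfalso
    rw [hw] at h
    obtain ⟨r, ⟨_, x, hx, rfl⟩, hlt⟩ := exists_lt_of_lt_csSup ne h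
    have hwx : c.e w < c.e x := (hm _ _).1 (hlt.trans hx)
    have : c.e x ≤ sSup S := le_csSup bd ⟨by assumption, x, hx, rfl⟩
    linarith
  · exact c.inj h
  · exfalso
    have hwu : c.e w < c.e u := by
      refine lt_of_le_of_ne (by linarith) fun h' => ?_
      rw [c.inj h'] at h; linarith
    obtain ⟨y, hy1, hy2⟩ := c.exists_between (c.nonneg w)
      ((min_le_right _ _).trans (c.lt_one u).le) (lt_min h hwu)
    have hy3 := hy2.trans_le (min_le_left _ _)
    have hy4 := hy2.trans_le (min_le_right _ _)
    have := (hm _ _).2 hy1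
    have : c.e y ≤ sSup S := le_csSup bd ⟨hy4.le, y, by linarith, rfl⟩
    linarith

/-- All points other than the fixed point are moved in the same direction. -/
lemma dichotomy {g : Equiv.Perm S1} (hg : PosHomeo g) (hp : g p = p)
    (hfix : ∀ x, g x = x → x = p) :
    (∀ x, x ≠ p → c.e x < c.e (g x)) ∨ (∀ x, x ≠ p → c.e (g x) < c.e x) := by
  by_contra! h
  obtain ⟨⟨u, hu, hu'⟩, v, hv, hv'⟩ := h
  have hu1 : c.e (g u) < c.e u := lt_of_le_of_ne hu' fun h => hu (hfix u (c.inj h))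
  have hv1 : c.e v < c.e (g v) := lt_of_le_of_ne hv' fun h => hv (hfix v (c.inj h.symm))
  rcases lt_trichotomy (c.e u) (c.e v) with h | h | h
  · -- Here the inverse of `g` moves `u` forward and `v` backward.
    obtain ⟨w, hw, hw'⟩ := c.fix_between (g := g.symm)
      (fun x y => by
        rw [← c.map_lt_iff hg hp, g.apply_symm_apply, g.apply_symm_apply]) hu h
      (by rw [← c.map_lt_iff hg hp, g.apply_symm_apply]; exact hu1)
      (by rw [← c.map_lt_iff hg hp, g.apply_symm_apply]; exact hv1)
    exact hw (hfix w ((g.symm_apply_eq.1 hw').symm))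
  · rw [c.inj h] at hu1; linarith
  · obtain ⟨w, hw, hw'⟩ := c.fix_between (fun x y => c.map_lt_iff hg hp) hv h hv1 hu1
    exact hw (hfix w hw')

lemma pow_ne {g : Equiv.Perm S1} (hp : g p = p) {x : S1} (hx : x ≠ p) (n : ℕ) :
    (g ^ n) x ≠ p := by
  induction n with
  | zero => simpa
  | succ n ih =>
    rw [pow_succ', Equiv.Perm.mul_apply]
    exact fun h => ih (g.injective (h.trans hp.symm))

lemma orbit_up {g : Equiv.Perm S1} (hg : PosHomeo g) (hp : g p = p)
    (hr : ∀ x, x ≠ p → c.e x < c.e (g x)) {x : S1} (hx : x ≠ p) (y : S1) :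
    ∃ n : ℕ, c.e y < c.e ((g ^ n) x) := by
  by_contra! h
  set S : Set ℝ := range fun n : ℕ => c.e ((g ^ n) x)
  have ne : S.Nonempty := ⟨_, 0, rfl⟩
  have bd : BddAbove S := ⟨c.e y, by rintro _ ⟨n, rfl⟩; exact h n⟩
  have l1 : c.e x ≤ sSup S := le_csSup bd ⟨0, by simp⟩
  have l2 : sSup S ≤ c.e y := csSup_le ne (by rintro _ ⟨n, rfl⟩; exact h n)
  have x0 := c.pos_of_ne hx
  obtain ⟨w, hw⟩ := c.surj (sSup S) (by linarith) (l2.trans_lt (c.lt_one y))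
  have w0 : g.symm w ≠ p := by
    intro h'
    rw [Equiv.symm_apply_eq, hp] at h'
    rw [h', c.base] at hw; linarith
  have hlt := hr _ w0
  rw [g.apply_symm_apply, hw] at hlt
  obtain ⟨_, ⟨n, rfl⟩, hn⟩ := exists_lt_of_lt_csSup ne hlt
  have h3 := c.map_lt hg hp hn
  rw [g.apply_symm_apply, hw] at h3
  have : c.e ((g ^ (n + 1)) x) ≤ sSup S := le_csSup bd ⟨n + 1, rfl⟩
  rw [pow_succ', Equiv.Perm.mul_apply] at this
  linarith

lemma orbit_down {g : Equiv.Perm S1} (hg : PosHomeo g) (hp : g p = p)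
    (hr : ∀ x, x ≠ p → c.e (g x) < c.e x) {x : S1} {y : S1} (hy : y ≠ p) :
    ∃ n : ℕ, c.e ((g ^ n) x) < c.e y := by
  by_contra! h
  set S : Set ℝ := range fun n : ℕ => c.e ((g ^ n) x)
  have ne : S.Nonempty := ⟨_, 0, rfl⟩
  have bd : BddBelow S := ⟨c.e y, by rintro _ ⟨n, rfl⟩; exact h n⟩
  have l1 : sInf S ≤ c.e x := csInf_le bd ⟨0, by simp⟩
  have l2 : c.e y ≤ sInf S := le_csInf ne (by rintro _ ⟨n, rfl⟩; exact h n)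
  have y0 := c.pos_of_ne hy
  obtain ⟨w, hw⟩ := c.surj (sInf S) (by linarith) (l1.trans_lt (c.lt_one x))
  have w0 : g.symm w ≠ p := by
    intro h'
    rw [Equiv.symm_apply_eq, hp] at h'
    rw [h', c.base] at hw; linarith
  have hlt := hr _ w0
  rw [g.apply_symm_apply, hw] at hlt
  obtain ⟨_, ⟨n, rfl⟩, hn⟩ := exists_lt_of_csInf_lt ne hlt
  have h3 := c.map_lt hg hp hn
  rw [g.apply_symm_apply, hw] at h3
  have : sInf S ≤ c.e ((g ^ (n + 1)) x) := csInf_le bd ⟨n + 1, rfl⟩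
  rw [pow_succ', Equiv.Perm.mul_apply] at this
  linarith

/-- The image interval `g(I)`, given by the images of the endpoints of `I`. -/
def img (g : Equiv.Perm S1) (I : GoodInt) : GoodInt := ⟨g I.a, g I.b, g.injective.ne I.ne⟩

lemma img_carrier (c : Coord p) {g : Equiv.Perm S1} (hg : PosHomeo g) (hp : g p = p) (I : GoodInt) :
    (img g I).carrier = ⇑g '' I.carrier := by
  ext z
  rw [Equiv.image_eq_preimage_symm]
  show sbtw (g I.a) z (g I.b) ↔ sbtw I.a (g.symm z) I.b
  obtain ⟨y, rfl⟩ := g.surjective z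
  rw [g.symm_apply_apply, c.sbtw_iff, c.sbtw_iff]
  simp only [c.map_lt_iff hg hp]

lemma img_mem (c : Coord p) {L : LamSys} {g : Equiv.Perm S1} (hg : L.InAut g) (hp : g p = p) {I : GoodInt}
    (hI : I ∈ L.mem) : img g I ∈ L.mem := by
  obtain ⟨J, hJ, h⟩ := hg.2 I hI
  rw [← c.img_carrier hg.1 hp] at h
  rwa [← carrier_inj h]

lemma img_pos {g : Equiv.Perm S1} (hg : PosHomeo g) (hp : g p = p) {I : GoodInt}
    (hI : c.Pos I) : c.Pos (img g I) :=
  c.map_lt hg hp hI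

lemma mem_E {L : LamSys} {x : S1} : x ∈ L.E ↔ ∃ I ∈ L.mem, x = I.a ∨ x = I.b := by
  simp [LamSys.E, GoodInt.verts]

lemma pow_E (c : Coord p) {L : LamSys} {g : Equiv.Perm S1} (hg : L.InAut g) (hp : g p = p) {x : S1}
    (hx : x ∈ L.E) (n : ℕ) : (g ^ n) x ∈ L.E := by
  induction n with
  | zero => simpa
  | succ n ih =>
    rw [pow_succ', Equiv.Perm.mul_apply]
    obtain ⟨I, hI, h⟩ := mem_E.1 ih
    refine mem_E.2 ⟨img g I, c.img_mem hg hp hI, ?_⟩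
    rcases h with h | h <;> rw [h]
    · exact Or.inl rfl
    · exact Or.inr rfl

lemma pow_joined {L : LamSys} {g : Equiv.Perm S1} (hg : L.InAut g) (hp : g p = p) {x : S1}
    (hx : c.Joined L x) (n : ℕ) : c.Joined L ((g ^ n) x) := by
  induction n with
  | zero => simpa
  | succ n ih =>
    rw [pow_succ', Equiv.Perm.mul_apply]
    obtain ⟨h, hm⟩ := ih
    have himg := c.img_mem hg hp hm
    simp only [img, hp] at himg
    exact ⟨_, himg⟩

/-- The fixed point of a parabolic automorphism of two transverse lamination systems, one of which
is loose, is not an endpoint of a leaf of that system. Otherwise the orbits of a point joined to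
`p` and of an endpoint of the other system alternate near `p`. -/
lemma base_not_E (c : Coord p) {L L' : LamSys} (hL : L.Loose) (htr : Disjoint L.E L'.E)
    {g : Equiv.Perm S1} (hg : L.InAut g) (hg' : L'.InAut g) (hp : g p = p)
    (hfix : ∀ x, g x = x → x = p) : p ∉ L.E := by
  intro hpE
  obtain ⟨x, hx⟩ : ∃ x, c.Joined L x := by
    obtain ⟨I, hI, h | h⟩ := mem_E.1 hpE
    · subst h; exact ⟨I.b, I.ne, hI⟩
    · subst h; exact ⟨I.a, I.ne.symm, L.dual_mem I hI⟩
  obtain ⟨w, hw, hwE⟩ : ∃ w, w ≠ p ∧ w ∈ L'.E := by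
    obtain ⟨I, hI⟩ := L'.nonempty
    by_cases h : I.a = p
    · exact ⟨I.b, fun h' => I.ne (h.trans h'.symm), mem_E.2 ⟨I, hI, Or.inr rfl⟩⟩
    · exact ⟨I.a, h, mem_E.2 ⟨I, hI, Or.inl rfl⟩⟩
  have hwn : ∀ n, ¬ c.Joined L ((g ^ n) w) := by
    rintro n ⟨h, hm⟩
    exact Set.disjoint_left.1 htr (mem_E.2 ⟨_, hm, Or.inr rfl⟩) (c.pow_E hg' hp hwE n)
  have hxn := c.pow_joined hg hp hx
  have hx0 : x ≠ p := hx.1.symm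
  rcases c.dichotomy hg.1 hp hfix with hr | hr
  · obtain ⟨n₁, h₁⟩ := c.orbit_up hg.1 hp hr hw x
    obtain ⟨n₂, h₂⟩ := c.orbit_up hg.1 hp hr hx0 ((g ^ n₁) w)
    obtain ⟨n₃, h₃⟩ := c.orbit_up hg.1 hp hr hw ((g ^ n₂) x)
    obtain ⟨n₄, h₄⟩ := c.orbit_up hg.1 hp hr hx0 ((g ^ n₃) w)
    exact c.no_alternation hL hx (hwn n₁) (hxn n₂) (hwn n₃) (hxn n₄) h₁ h₂ h₃ h₄
  · obtain ⟨n₁, h₁⟩ := c.orbit_down hg.1 hp hr (x := w) hx0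
    obtain ⟨n₂, h₂⟩ := c.orbit_down hg.1 hp hr (x := x) (pow_ne hp hw n₁)
    obtain ⟨n₃, h₃⟩ := c.orbit_down hg.1 hp hr (x := w) (pow_ne hp hx0 n₂)
    obtain ⟨n₄, h₄⟩ := c.orbit_down hg.1 hp hr (x := x) (pow_ne hp hw n₃)
    exact c.no_alternation hL (hxn n₄) (hwn n₃) (hxn n₂) (hwn n₁) hx h₄ h₃ h₂ h₁

/-! ### The crown at the fixed point -/

/-- The outermost leaves seen from `p`: the maximal leaf intervals avoiding `p`. -/
abbrev Out (L : LamSys) : Set GoodInt := c.Mx L univ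

lemma out_vert {L : LamSys} {J : GoodInt} (hJ : J ∈ c.Out L) :
    J.a ∈ gapVerts (c.Out L) ∧ J.b ∈ gapVerts (c.Out L) := by
  have pJ : c.e J.a < c.e J.b := hJ.2.1
  have key : ∀ x, c.e J.a ≤ c.e x → c.e x ≤ c.e J.b → x ∉ J.carrier →
      x ∈ gapVerts (c.Out L) := by
    intro x h1 h2 hx
    unfold gapVerts
    rw [Set.mem_compl_iff, Set.mem_iUnion₂]
    rintro ⟨K, hK, hxK⟩
    have hne : J ≠ K := by rintro rfl; exact hx hxK
    have hd := c.Mx_disj hJ hK hne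
    rw [c.mem_pos hK.2.1] at hxK
    -- The open set `K` meets `J` near the endpoint `x` of `J`.
    obtain ⟨y, hy1, hy2⟩ := c.exists_between
      (le_trans (c.nonneg J.a) (le_max_left _ (c.e K.a)))
      (le_trans (min_le_left (c.e J.b) (c.e K.b)) (c.lt_one _).le)
      (max_lt (lt_min pJ (by linarith)) (lt_min (by linarith) (by linarith)))
    have := (le_max_left _ _).trans_lt hy1
    have := (le_max_right _ _).trans_lt hy1
    have := hy2.trans_le (min_le_left _ _)
    have := hy2.trans_le (min_le_right _ _)
    exact Set.disjoint_left.1 hd ((c.mem_pos hJ.2.1 y).2 ⟨by assumption, by assumption⟩)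
      ((c.mem_pos hK.2.1 y).2 ⟨by assumption, by assumption⟩)
  constructor
  · refine key _ le_rfl pJ.le fun h => ?_
    rw [c.mem_pos hJ.2.1] at h; linarith
  · refine key _ pJ.le le_rfl fun h => ?_
    rw [c.mem_pos hJ.2.1] at h; linarith

lemma out_base {L : LamSys} : p ∈ gapVerts (c.Out L) := by
  unfold gapVerts
  rw [Set.mem_compl_iff, Set.mem_iUnion₂]
  rintro ⟨K, hK, h⟩
  exact c.base_not_mem hK.2.1 h

lemma out_not_leaf {L : LamSys} : ¬ IsLeafGap (c.Out L) := by
  rintro ⟨I, hI⟩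
  have h1 : I ∈ c.Out L := by rw [hI]; exact Or.inl rfl
  have h2 : I.dual ∈ c.Out L := by rw [hI]; exact Or.inr rfl
  have h3 : c.e I.a < c.e I.b := h1.2.1
  have h4 : c.e I.b < c.e I.a := h2.2.1
  linarith

/-- When `p` is not an endpoint, unlinkedness of a leaf with its image bounds the leaves above a
given one, so every leaf lies on an outermost one. -/
lemma exists_out {L : LamSys} {g : Equiv.Perm S1} (hg : L.InAut g) (hp : g p = p)
    (hfix : ∀ x, g x = x → x = p) (hpE : p ∉ L.E) {I : GoodInt} (hI : I ∈ L.mem)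
    (pI : c.Pos I) : ∃ K ∈ c.Out L, I.carrier ⊆ K.carrier := by
  have hne : ∀ K ∈ L.mem, K.a ≠ p ∧ K.b ≠ p := fun K hK =>
    ⟨fun h => hpE (mem_E.2 ⟨K, hK, Or.inl h.symm⟩),
      fun h => hpE (mem_E.2 ⟨K, hK, Or.inr h.symm⟩)⟩
  obtain ⟨u, hu, hb⟩ : ∃ u < 1, ∀ K ∈ L.mem, c.e K.a ≤ c.e I.a → c.e I.b ≤ c.e K.b →
      c.e K.b ≤ u := by
    have pI' : c.e I.a < c.e I.b := pI
    rcases c.dichotomy hg.1 hp hfix with hr | hr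
    · refine ⟨c.e (g I.a), c.lt_one _, fun K hK h1 h2 => ?_⟩
      have := c.map_le hg.1 hp h1
      by_contra! h
      exact c.unlinked hK (c.img_mem hg hp hK) (hr _ (hne K hK).1)
        (show c.e (g K.a) < c.e K.b by linarith) (hr _ (hne K hK).2)
    · refine ⟨c.e (g.symm I.a), c.lt_one _, fun K hK h1 h2 => ?_⟩
      by_contra! h
      have h3 := c.map_lt hg.1 hp h
      rw [g.apply_symm_apply] at h3
      exact c.unlinked (c.img_mem hg hp hK) hK (hr _ (hne K hK).1)
        (show c.e K.a < c.e (g K.b) by linarith) (hr _ (hne K hK).2)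
  obtain ⟨K, hK, hIK⟩ := c.exists_Mx L (C := {q | q.2 ≤ u})
    (isClosed_le continuous_snd continuous_const) hu (fun q hq => hq) hI pI
    (hb I hI le_rfl le_rfl)
  have hs := (c.sub_pos pI hK.2.1).1 hIK
  exact ⟨K, ⟨hK.1, hK.2.1, mem_univ _, fun K' hK' _ h1 h2 =>
    hK.2.2.2 K' hK' (hb K' hK' (h1.trans hs.1) (hs.2.trans h2)) h1 h2⟩, hIK⟩

lemma out_gap {L : LamSys} {g : Equiv.Perm S1} (hg : L.InAut g) (hp : g p = p)
    (hfix : ∀ x, g x = x → x = p) (hpE : p ∉ L.E) : L.IsGap (c.Out L) := by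
  refine ⟨fun K hK => hK.1, fun I hI J hJ => c.Mx_disj hI hJ, c.covers_of_pos ?_⟩
  intro I hI pI
  obtain ⟨K, hK, h⟩ := c.exists_out hg hp hfix hpE hI pI
  exact ⟨K, hK, Or.inl h⟩

lemma out_infinite {L : LamSys} {g : Equiv.Perm S1} (hg : L.InAut g) (hp : g p = p)
    (hfix : ∀ x, g x = x → x = p) (hpE : p ∉ L.E) : ¬ (gapVerts (c.Out L)).Finite := by
  intro hfin
  have hne : ∀ K ∈ L.mem, K.a ≠ p ∧ K.b ≠ p := fun K hK =>
    ⟨fun h => hpE (mem_E.2 ⟨K, hK, Or.inl h.symm⟩),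
      fun h => hpE (mem_E.2 ⟨K, hK, Or.inr h.symm⟩)⟩
  obtain ⟨I₀, hI₀⟩ : ∃ I, I ∈ c.Out L := by
    obtain ⟨I, hI⟩ := L.nonempty
    obtain ⟨K, hK, _⟩ := (c.out_gap hg hp hfix hpE).2.2 I hI
    exact ⟨K, hK⟩
  have step : ∀ J ∈ c.Out L, ∃ K ∈ c.Out L, c.e K.a ≤ c.e (g J.a) ∧ c.e (g J.b) ≤ c.e K.b := by
    intro J hJ
    have pJ := c.img_pos hg.1 hp hJ.2.1
    obtain ⟨K, hK, h⟩ := c.exists_out hg hp hfix hpE (c.img_mem hg hp hJ.1) pJ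
    exact ⟨K, hK, (c.sub_pos pJ hK.2.1).1 h⟩
  rcases c.dichotomy hg.1 hp hfix with hr | hr
  · have hB : (GoodInt.b '' c.Out L).Finite :=
      hfin.subset (by rintro _ ⟨J, hJ, rfl⟩; exact (c.out_vert hJ).2)
    obtain ⟨_, ⟨J, hJ, rfl⟩, hmax⟩ := Set.exists_max_image _ c.e hB ⟨_, I₀, hI₀, rfl⟩
    obtain ⟨K, hK, _, h⟩ := step J hJ
    have := hmax _ ⟨K, hK, rfl⟩
    have := hr _ (hne J hJ.1).2
    linarith
  · have hA : (GoodInt.a '' c.Out L).Finite :=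
      hfin.subset (by rintro _ ⟨J, hJ, rfl⟩; exact (c.out_vert hJ).1)
    obtain ⟨_, ⟨J, hJ, rfl⟩, hmin⟩ := Set.exists_min_image _ c.e hA ⟨_, I₀, hI₀, rfl⟩
    obtain ⟨K, hK, h, _⟩ := step J hJ
    have := hmin _ ⟨K, hK, rfl⟩
    have := hr _ (hne J hJ.1).1
    linarith

/-- Suppose that inside an outermost interval `J` there are leaves `(J.a, x)` and `(y, J.b)`. Then
the leaves strictly inside `J` cannot accumulate on `J`, so `J` borders a non-leaf gap on its inner
side, which shares vertices with the gap of outermost leaves: this contradicts looseness. -/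
lemma no_subdivision {L : LamSys} (hL : L.Loose) (hgap : L.IsGap (c.Out L)) {J : GoodInt}
    (hJ : J ∈ c.Out L) {x y : S1} (hax : J.a ≠ x) (hyb : y ≠ J.b)
    (mx : (⟨J.a, x, hax⟩ : GoodInt) ∈ L.mem) (my : (⟨y, J.b, hyb⟩ : GoodInt) ∈ L.mem)
    (hx1 : c.e J.a < c.e x) (hx2 : c.e x < c.e J.b)
    (hy1 : c.e J.a < c.e y) (hy2 : c.e y < c.e J.b) : False := by
  have pJ := hJ.2.1
  have pJ' : c.e J.a < c.e J.b := hJ.2.1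
  set m := max (c.e x) (c.e y) with hm
  have hmx : c.e x ≤ m := le_max_left _ _
  have hmy : c.e y ≤ m := le_max_right _ _
  have hmb : m < c.e J.b := max_lt hx2 hy2
  set C : Set (ℝ × ℝ) := {q | (c.e J.a ≤ q.1 ∧ q.2 ≤ m) ∨ (c.e x ≤ q.1 ∧ q.2 ≤ c.e J.b)} with hC
  have Ccl : IsClosed C :=
    ((isClosed_le continuous_const continuous_fst).inter
      (isClosed_le continuous_snd continuous_const)).union
    ((isClosed_le continuous_const continuous_fst).inter
      (isClosed_le continuous_snd continuous_const))
  have Csub : ∀ K ∈ c.Mx L C, K.carrier ⊆ J.carrier := by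
    intro K hK
    refine (c.sub_pos hK.2.1 pJ).2 ?_
    rcases hK.2.2.1 with ⟨h1, h2⟩ | ⟨h1, h2⟩
    · change c.e J.a ≤ c.e K.a at h1
      change c.e K.b ≤ m at h2
      exact ⟨h1, by linarith⟩
    · change c.e x ≤ c.e K.a at h1
      change c.e K.b ≤ c.e J.b at h2
      exact ⟨by linarith, h2⟩
  set H : Set GoodInt := {J.dual} ∪ c.Mx L C with hH
  have dJ : ∀ K ∈ c.Mx L C, Disjoint J.dual.carrier K.carrier := by
    intro K hK
    rw [Set.disjoint_left]
    intro z hz hz'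
    have h1 := (c.mem_pos pJ z).1 (Csub K hK hz')
    have h2 := (c.mem_neg pJ z).1 hz
    rcases h2 with h2 | h2 <;> linarith
  have JnH : J ∉ H := by
    rintro (h | h)
    · have : J = J.dual := h
      have h2 : J.a = J.b := congrArg GoodInt.a this
      exact J.ne h2
    · rcases h.2.2.1 with h | h
      · have h2 : c.e J.b ≤ m := h.2
        linarith
      · have h2 : c.e x ≤ c.e J.a := h.1
        linarith
  have hHgap : L.IsGap H := by
    refine ⟨?_, ?_, ?_⟩
    · rintro K (rfl | hK)
      · exact L.dual_mem _ hJ.1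
      · exact hK.1
    · rintro I (rfl | hI) K (rfl | hK) hne
      · exact absurd rfl hne
      · exact dJ K hK
      · exact (dJ I hI).symm
      · exact c.Mx_disj hI hK hne
    · apply c.covers_of_pos
      intro K mK pK
      have pK' : c.e K.a < c.e K.b := pK
      have u1 := c.unlinked hJ.1 mK
      have u2 := c.unlinked mK hJ.1
      -- Leaves outside `J`, or containing it, lie on the dual of `J`.
      by_cases hout : c.e K.b ≤ c.e J.a ∨ c.e J.b ≤ c.e K.a
      · refine ⟨J.dual, Or.inl rfl, Or.inl fun z hz => ?_⟩
        rw [c.mem_pos pK] at hz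
        rw [c.mem_neg pJ]
        rcases hout with h | h
        · exact Or.inl (by linarith)
        · exact Or.inr (by linarith)
      by_cases hsup : c.e K.a ≤ c.e J.a ∧ c.e J.b ≤ c.e K.b
      · refine ⟨J.dual, Or.inl rfl, Or.inr fun z hz => ?_⟩
        rw [c.mem_neg pK] at hz
        rw [c.mem_neg pJ]
        rcases hz with h | h
        · exact Or.inl (by linarith)
        · exact Or.inr (by linarith)
      push Not at hout
      have hka : c.e J.a ≤ c.e K.a := by
        by_contra! h
        by_cases h' : c.e K.b < c.e J.b
        · exact u2 h hout.1 h'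
        · exact hsup ⟨h.le, not_lt.1 h'⟩
      have hkb : c.e K.b ≤ c.e J.b := by
        by_contra! h
        by_cases h' : c.e J.a < c.e K.a
        · exact u1 h' hout.2 h
        · exact hsup ⟨not_lt.1 h', h.le⟩
      have v1 := c.unlinked mx mK
      have v2 := c.unlinked mK my
      have hin : (c.e K.a, c.e K.b) ∈ C := by
        show (c.e J.a ≤ c.e K.a ∧ c.e K.b ≤ m) ∨ (c.e x ≤ c.e K.a ∧ c.e K.b ≤ c.e J.b)
        by_cases h1 : c.e x ≤ c.e K.a
        · exact Or.inr ⟨h1, hkb⟩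
        push Not at h1
        refine Or.inl ⟨hka, ?_⟩
        by_contra! h2
        rcases hka.lt_or_eq with h3 | h3
        · exact v1 h3 h1 (by show c.e x < c.e K.b; linarith)
        · have h4 : c.e K.b < c.e J.b := lt_of_not_ge fun h => hsup ⟨h3.symm.le, h⟩
          exact v2 (by show c.e K.a < c.e y; linarith) (by show c.e y < c.e K.b; linarith) h4
      obtain ⟨K', hK', h⟩ := c.exists_Mx L Ccl (c.lt_one J.b)
        (fun q hq => by
          rcases hq with hq | hq
          · exact hq.2.trans hmb.le
          · exact hq.2) mK pK hin
      exact ⟨K', Or.inr hK', Or.inl h⟩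
  have hHleaf : ¬ IsLeafGap H := by
    rintro ⟨I, hI⟩
    have h1 : J.dual ∈ H := Or.inl rfl
    have h2 : J ∈ H := by
      rw [hI] at h1 ⊢
      rcases h1 with h1 | h1
      · exact Or.inr (by rw [← h1]; rfl)
      · have h1' : J.dual = I.dual := h1
        refine Or.inl ?_
        have := congrArg GoodInt.dual h1'
        exact this
    exact JnH h2
  have haH : J.a ∈ gapVerts H := by
    unfold gapVerts
    rw [Set.mem_compl_iff, Set.mem_iUnion₂]
    rintro ⟨K, rfl | hK, h⟩
    · rw [c.mem_neg pJ] at h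
      rcases h with h | h <;> linarith
    · have := (c.mem_pos pJ _).1 (Csub K hK h)
      linarith
  exact Set.disjoint_left.1 (hL _ _ hgap hHgap c.out_not_leaf hHleaf
    (fun h => JnH (h ▸ hJ))) (c.out_vert hJ).1 haH

/-- If the fixed point is not an endpoint of `L`, the outermost leaves form an invariant crown
with pivot the fixed point. -/
lemma out_crown (c : Coord p) {L : LamSys} (hq : L.QuiteFull) (hL : L.Loose) {g : Equiv.Perm S1}
    (hg : L.InAut g) (hp : g p = p) (hfix : ∀ x, g x = x → x = p) (hpE : p ∉ L.E) :
    ∃ G : Set GoodInt, L.IsGap G ∧ IsCrown G ∧ IsPivotOf p G ∧ MapsGapOnto g G := by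
  have hgap := c.out_gap hg hp hfix hpE
  have hcr : IsCrown (c.Out L) := (hq _ hgap).resolve_left (c.out_infinite hg hp hfix hpE)
  obtain ⟨t, q, hqt, htt, hG, hV⟩ := hcr
  have hIk : ∀ k, (⟨t k, t (k + 1), htt k⟩ : GoodInt) ∈ c.Out L := by
    intro k; rw [hG]; exact ⟨k, rfl, rfl⟩
  have htp : ∀ k, t k ≠ p := fun k h => hpE (mem_E.2 ⟨_, (hIk k).1, Or.inl h.symm⟩)
  have hqp : p = q := by
    have h : p ∈ Set.range t ∪ {q} := hV ▸ c.out_base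
    rcases h with ⟨k, hk⟩ | h
    · exact absurd hk (htp k)
    · exact h
  subst hqp
  have hmono : StrictMono fun k => c.e (t k) := strictMono_int_of_lt_succ fun k => (hIk k).2.1
  -- The endpoints of outermost leaves are images of tips.
  have hpre : ∀ v, v ≠ p → v ∈ gapVerts (c.Out L) → ∃ m, v = g (t m) := by
    intro v hv hvV
    by_cases h : g.symm v ∈ gapVerts (c.Out L)
    · rw [hV] at h
      rcases h with ⟨m, hm⟩ | h
      · exact ⟨m, by rw [hm, g.apply_symm_apply]⟩
      · have h' : g.symm v = p := h
        rw [Equiv.symm_apply_eq, hp] at h'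
        exact absurd h' hv
    · exfalso
      unfold gapVerts at h hvV
      rw [Set.mem_compl_iff, not_not, Set.mem_iUnion₂] at h
      obtain ⟨I, hI, hvI⟩ := h
      obtain ⟨K, hK, hIK⟩ := c.exists_out hg hp hfix hpE (c.img_mem hg hp hI.1)
        (c.img_pos hg.1 hp hI.2.1)
      refine hvV (Set.mem_iUnion₂.2 ⟨K, hK, hIK ?_⟩)
      rw [c.img_carrier hg.1 hp]
      exact ⟨_, hvI, g.apply_symm_apply v⟩
  have hJp : ∀ J ∈ c.Out L, J.a ≠ p ∧ J.b ≠ p := fun J hJ =>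
    ⟨fun h => hpE (mem_E.2 ⟨J, hJ.1, Or.inl h.symm⟩),
      fun h => hpE (mem_E.2 ⟨J, hJ.1, Or.inr h.symm⟩)⟩
  have hgm : ∀ {i j : ℤ}, i ≤ j → c.e (g (t i)) ≤ c.e (g (t j)) := fun h =>
    c.map_le hg.1 hp (hmono.monotone h)
  have hgl : ∀ {i j : ℤ}, c.e (g (t i)) < c.e (g (t j)) → i < j := fun h =>
    hmono.lt_iff_lt.1 ((c.map_lt_iff hg.1 hp).1 h)
  -- The image of a tip is never inside an outermost leaf.
  have hnot : ∀ k, ∀ J ∈ c.Out L, g (t k) ∉ J.carrier := by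
    intro k J hJ hk
    rw [c.mem_pos hJ.2.1] at hk
    obtain ⟨m, hm⟩ := hpre _ (hJp J hJ).1 (c.out_vert hJ).1
    obtain ⟨n, hn⟩ := hpre _ (hJp J hJ).2 (c.out_vert hJ).2
    have hmk : m < k := hgl (by rw [← hm]; exact hk.1)
    have hkn : k < n := hgl (by rw [← hn]; exact hk.2)
    have e1 : c.e J.a < c.e (g (t (m + 1))) := by
      rw [hm]; exact c.map_lt hg.1 hp (hmono (by omega))
    have e2 : c.e (g (t (n - 1))) < c.e J.b := by
      rw [hn]; exact c.map_lt hg.1 hp (hmono (by omega))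
    have f1 := hgm (show m + 1 ≤ k by omega)
    have f2 := hgm (show k ≤ n - 1 by omega)
    have m1 := c.img_mem hg hp (hIk m).1
    have m2 := c.img_mem hg hp (hIk (n - 1)).1
    simp only [img, sub_add_cancel, ← hm, ← hn] at m1 m2
    exact c.no_subdivision hL hgap hJ _ _ m1 m2 e1 (by linarith) (by linarith) e2
  have himg : ∀ I ∈ c.Out L, img g I ∈ c.Out L := by
    intro I hI
    have pI := c.img_pos hg.1 hp hI.2.1
    have pI' : c.e (g I.a) < c.e (g I.b) := pI
    obtain ⟨K, hK, hIK⟩ := c.exists_out hg hp hfix hpE (c.img_mem hg hp hI.1) pI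
    have hs : c.e K.a ≤ c.e (g I.a) ∧ c.e (g I.b) ≤ c.e K.b := (c.sub_pos pI hK.2.1).1 hIK
    obtain ⟨k, hka, hkb⟩ : I ∈ {I : GoodInt | ∃ k : ℤ, I.a = t k ∧ I.b = t (k + 1)} := hG ▸ hI
    have na := hnot k K hK
    have nb := hnot (k + 1) K hK
    rw [c.mem_pos hK.2.1, ← hka] at na
    rw [c.mem_pos hK.2.1, ← hkb] at nb
    have : img g I = K := by
      apply c.ext_e
      · show c.e (g I.a) = c.e K.a
        by_contra hne
        exact na ⟨lt_of_le_of_ne hs.1 (Ne.symm hne), by linarith⟩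
      · show c.e (g I.b) = c.e K.b
        by_contra hne
        exact nb ⟨by linarith, lt_of_le_of_ne hs.2 hne⟩
    rwa [this]
  have hw : IsCrownWith (c.Out L) t p := ⟨hqt, htt, hG, hV⟩
  refine ⟨c.Out L, hgap, ⟨t, p, hw⟩, ⟨t, hw⟩, ?_, ?_⟩
  · exact fun I hI => ⟨img g I, himg I hI, c.img_carrier hg.1 hp I⟩
  · intro J hJ
    obtain ⟨m, hm⟩ := hpre _ (hJp J hJ).1 (c.out_vert hJ).1
    refine ⟨_, hIk m, ?_⟩
    rw [← c.img_carrier hg.1 hp]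
    by_contra hne
    have hK := himg _ (hIk m)
    have hd := c.Mx_disj hJ hK fun h => hne (congrArg _ h)
    -- Both intervals have left endpoint `g (t m)`, hence they overlap.
    have p1 : c.e J.a < c.e J.b := hJ.2.1
    have p2 : c.e (g (t m)) < c.e (g (t (m + 1))) := hK.2.1
    obtain ⟨z, hz1, hz2⟩ := c.exists_between (c.nonneg J.a)
      ((min_le_left _ _).trans (c.lt_one J.b).le) (lt_min p1 (by rw [hm]; exact p2))
    refine Set.disjoint_left.1 hd
      ((c.mem_pos hJ.2.1 z).2 ⟨hz1, hz2.trans_le (min_le_left _ _)⟩)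
      ((c.mem_pos hK.2.1 z).2 ⟨?_, hz2.trans_le (min_le_right _ _)⟩)
    show c.e (g (t m)) < c.e z
    rwa [← hm]

end Coord

/-- a parabolic automorphism of a pseudo-fibered pair preserves,
in each of the two lamination systems, a crown whose pivot is its unique fixed
point. -/
theorem statement11 (L1 L2 : LamSys) (hpf : PseudoFibered L1 L2)
    (g : Equiv.Perm S1) (hg1 : L1.InAut g) (hg2 : L2.InAut g)
    (hpar : Parabolic g) (p : S1) (hp : g p = p) :
    (∃ G : Set GoodInt, L1.IsGap G ∧ IsCrown G ∧ IsPivotOf p G ∧ MapsGapOnto g G) ∧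
    (∃ G : Set GoodInt, L2.IsGap G ∧ IsCrown G ∧ IsPivotOf p G ∧ MapsGapOnto g G) := by
  obtain ⟨c⟩ := exists_coord p
  have hfix : ∀ x, g x = x → x = p := fun x hx => hpar.unique hx hp
  have htr : Disjoint L1.E L2.E := Set.disjoint_iff_inter_eq_empty.2 hpf.transverse
  exact ⟨c.out_crown hpf.qf1 hpf.loose1 hg1 hp hfix
      (c.base_not_E hpf.loose1 htr hg1 hg2 hp hfix),
    c.out_crown hpf.qf2 hpf.loose2 hg2 hp hfix
      (c.base_not_E hpf.loose2 htr.symm hg2 hg1 hp hfix)⟩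

end Veering
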